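/- arXiv:1609.06385 — 8 statements merged into one kernel-verified Lean document; each statement's English description precedes it below -/
import Mathlib

section
/- Let S ⊆ ℝ² be a score set and L : S × {1,2} → ℝ a surrogate loss with adjustment l such that L is convex, lower-bounded in risk, and symmetric, and suppose L satisfies Condition 1 and Condition 3 with ζ = δ_binary (the binary loss L₂ being L itself, with S₂ = S and l₂ = l). Then for all ε ∈ (0,1], δ_max(ε) = δ_binary(ε). -/
/-!
Write `H p` for the infimum over `S` of the risk at `p`; on the simplex pseudo-risk and risk agree,
so `deltaBinary ε = H (pEps 0) - H (pEps ε)`. Symmetry makes the two losses equal at any score with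
equal coordinates, and convexity lets any score be averaged with its swap without increasing the
risk at `pEps 0`; so the infimum of the risk over such scores is `H (pEps 0)` whatever the
probability vector (`einf_diag`). By Condition 1, `deltaMaxP ε p = H (pEps 0) - H p` as soon as some
index is `ε`-suboptimal; it is `+∞` otherwise. Taking `p = pEps ε` gives `deltaMax ≤ deltaBinary`.
Conversely, if the entries of `p` differ by at least `ε`, then `pEps ε` is a convex combination of
`p` and its swap, so `H p ≤ H (pEps ε)` (`einf_le_pEps`).

For empty `S` both sides are `⊤ - ⊤ = ⊥` in `EReal`.
-/

open scoped BigOperators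

noncomputable section

namespace Calib

/-- Infimum in the extended reals of a real-valued function over a set
(empty set ↦ `+∞`). -/
def einf {α : Type*} (A : Set α) (f : α → ℝ) : EReal :=
  sInf ((fun a => (f a : EReal)) '' A)

/-- Infimum in the extended reals of an `EReal`-valued function over a set. -/
def einfE {α : Type*} (A : Set α) (f : α → EReal) : EReal :=
  sInf (f '' A)

/-- Supremum in the extended reals of a real-valued function over a set. -/
def esup {α : Type*} (A : Set α) (f : α → ℝ) : EReal :=
  sSup ((fun a => (f a : EReal)) '' A)

/-- Supremum in the extended reals of an `EReal`-valued function over a set. -/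
def esupE {α : Type*} (A : Set α) (f : α → EReal) : EReal :=
  sSup (f '' A)

variable {K : ℕ}

/-- Pointwise surrogate risk `R(s,p) = ∑ k p_k L(s,k)`. -/
def risk (L : (Fin K → ℝ) → Fin K → ℝ) (s p : Fin K → ℝ) : ℝ :=
  ∑ k, p k * L s k

/-- Pseudo-risk `R'(s,p) = l(s) + ∑ k p_k (L(s,k) − l(s))` for an adjustment `l`. -/
def pseudoRisk (L : (Fin K → ℝ) → Fin K → ℝ) (l : (Fin K → ℝ) → ℝ)
    (s p : Fin K → ℝ) : ℝ :=
  l s + ∑ k, p k * (L s k - l s)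

/-- `M(S,j)`: scores in `S` whose `j`-th coordinate is maximal. -/
def Mset (S : Set (Fin K → ℝ)) (j : Fin K) : Set (Fin K → ℝ) :=
  {s ∈ S | ∀ k, s k ≤ s j}

/-- `max_y p_y − p_j ≥ ε`. -/
def subOpt (ε : ℝ) (p : Fin K → ℝ) (j : Fin K) : Prop :=
  ∃ y, ε ≤ p y - p j

/-- `T(S,ε,p)`: union of `M(S,j)` over `ε`-suboptimal indices `j`. -/
def Tset (S : Set (Fin K → ℝ)) (ε : ℝ) (p : Fin K → ℝ) : Set (Fin K → ℝ) :=
  {s | ∃ j, subOpt ε p j ∧ s ∈ Mset S j}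

/-- `J(ε,p)`: `ε`-suboptimal indices of maximal probability. -/
def Jset (ε : ℝ) (p : Fin K → ℝ) : Set (Fin K) :=
  {j | subOpt ε p j ∧ ∀ i, subOpt ε p i → p i ≤ p j}

/-- `δ_max(ε,p)`. -/
def deltaMaxP (L : (Fin K → ℝ) → Fin K → ℝ) (S : Set (Fin K → ℝ))
    (ε : ℝ) (p : Fin K → ℝ) : EReal :=
  einf (Tset S ε p) (fun s => risk L s p) - einf S (fun s => risk L s p)

/-- `δ_max(ε)`. -/
def deltaMax (L : (Fin K → ℝ) → Fin K → ℝ) (S : Set (Fin K → ℝ)) (ε : ℝ) : EReal :=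
  sInf ((fun p => deltaMaxP L S ε p) '' stdSimplex ℝ (Fin K))

/-- The vector `(a, b) ∈ ℝ²`. -/
def pair (a b : ℝ) : Fin 2 → ℝ := ![a, b]

/-- `p^ε = ((1+ε)/2, (1−ε)/2)`. -/
def pEps (ε : ℝ) : Fin 2 → ℝ := pair ((1 + ε) / 2) ((1 - ε) / 2)

/-- `δ_binary(ε)` for a binary loss `L₂` with adjustment `l₂`. -/
def deltaBinary (L2 : (Fin 2 → ℝ) → Fin 2 → ℝ) (S2 : Set (Fin 2 → ℝ))
    (l2 : (Fin 2 → ℝ) → ℝ) (ε : ℝ) : EReal :=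
  einf S2 (fun u => pseudoRisk L2 l2 u (pEps 0)) -
    einf S2 (fun v => pseudoRisk L2 l2 v (pEps ε))

/-- Condition 1. -/
def Cond1 (L : (Fin K → ℝ) → Fin K → ℝ) (S : Set (Fin K → ℝ)) : Prop :=
  ∀ ε : ℝ, 0 ≤ ε → ∀ p ∈ stdSimplex ℝ (Fin K), ∀ j0 ∈ Jset 0 p, ∀ je ∈ Jset ε p,
    einf (Tset S ε p) (fun s => risk L s p) =
      einf (Mset S je ∩ Mset S j0) (fun s => risk L s p)

/-- Condition 2 relative to a binary loss `L₂` with adjustment `l₂`. -/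
def Cond2 (L : (Fin K → ℝ) → Fin K → ℝ) (S : Set (Fin K → ℝ))
    (L2 : (Fin 2 → ℝ) → Fin 2 → ℝ) (S2 : Set (Fin 2 → ℝ))
    (l2 : (Fin 2 → ℝ) → ℝ) : Prop :=
  ∀ i j : Fin K, i ≠ j → ∀ p ∈ stdSimplex ℝ (Fin K),
    einfE S2 (fun u => esup S2 (fun v =>
        pseudoRisk L2 l2 u (pair ((p i + p j) / 2) ((p i + p j) / 2)) -
          pseudoRisk L2 l2 v (pair (p i) (p j)))) ≤
      einfE (Mset S i ∩ Mset S j) (fun s =>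
        esup {s' ∈ S | ∀ k, k ≠ i → k ≠ j → s' k = s k}
          (fun s' => risk L s p - risk L s' p))

/-- Condition 3 for an (extended-real-valued) function `ζ`. -/
def Cond3 (L2 : (Fin 2 → ℝ) → Fin 2 → ℝ) (S2 : Set (Fin 2 → ℝ))
    (l2 : (Fin 2 → ℝ) → ℝ) (ζ : ℝ → EReal) : Prop :=
  ∀ ε : ℝ, 0 < ε → ∀ p1 p2 : ℝ, 0 ≤ p2 → p2 ≤ p1 - ε → p1 + p2 ≤ 1 →
    ζ (p1 - p2) ≤
      einf S2 (fun u => pseudoRisk L2 l2 u (pair ((p1 + p2) / 2) ((p1 + p2) / 2))) -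
        einf S2 (fun v => pseudoRisk L2 l2 v (pair p1 p2))

/-- Lower-boundedness of the risk. -/
def LowerBoundedRisk (L : (Fin K → ℝ) → Fin K → ℝ) (S : Set (Fin K → ℝ)) : Prop :=
  ∃ B : ℝ, ∀ s ∈ S, ∀ p ∈ stdSimplex ℝ (Fin K), B ≤ risk L s p

/-- Symmetry of a loss. -/
def Symmetric (L : (Fin K → ℝ) → Fin K → ℝ) (S : Set (Fin K → ℝ)) : Prop :=
  ∀ σ : Equiv.Perm (Fin K), ∀ s ∈ S, (s ∘ σ) ∈ S ∧
    ∀ p ∈ stdSimplex ℝ (Fin K), risk L s p = risk L (s ∘ σ) (p ∘ σ)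

/-- The swapping assumption on a score set. -/
def SwapAssump (S : Set (Fin K → ℝ)) : Prop :=
  ∀ i j : Fin K, ∀ s, s ∈ Mset S j → (s ∘ Equiv.swap i j) ∈ Mset S i

/-- The vector obtained from `s` by replacing coordinates `i` and `j` with their average. -/
def avgVec (s : Fin K → ℝ) (i j : Fin K) : Fin K → ℝ :=
  fun k => if k = i ∨ k = j then (s i + s j) / 2 else s k

/-- The averaging assumption on a score set. -/
def AvgAssump (S : Set (Fin K → ℝ)) : Prop :=
  ∀ i j : Fin K, ∀ s, s ∈ Mset S j → (∀ k, k ≠ j → s k ≤ s i) → s i < s j →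
    avgVec s i j ∈ Mset S j ∩ Mset S i

/-- The Lee–Lin–Wahba loss `L(s,y) = ∑_{k ≠ y} φ(s_k)`. -/
def LLW (φ : ℝ → ℝ) (s : Fin K → ℝ) (y : Fin K) : ℝ :=
  ∑ k ∈ ({y}ᶜ : Finset (Fin K)), φ (s k)

/-- The sum-to-zero score set. -/
def sumZero (K : ℕ) : Set (Fin K → ℝ) := {s | ∑ k, s k = 0}

/-- The background-discrimination loss of Zhang. -/
def BD (ψ φ F : ℝ → ℝ) (s : Fin K → ℝ) (y : Fin K) : ℝ :=
  ψ (s y) + F (∑ k, φ (s k))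


/-- Condition ZhangInf (binary, for `ψ`). -/
def CondZhangInf (ψ : ℝ → ℝ) (L2 : (Fin 2 → ℝ) → Fin 2 → ℝ)
    (S2 : Set (Fin 2 → ℝ)) (l2 : (Fin 2 → ℝ) → ℝ) : Prop :=
  ∀ p1 p2 : ℝ, 0 ≤ p1 → 0 ≤ p2 →
    esupE S2 (fun v => einf S2 (fun u =>
        pseudoRisk L2 l2 u (pair ((p1 + p2) / 2) ((p1 + p2) / 2)) -
          pseudoRisk L2 l2 v (pair p1 p2))) =
      esupE S2 (fun v =>
        einf {u ∈ S2 | u 0 = u 1 ∧ ψ (u 0) + ψ (u 1) ≤ ψ (v 0) + ψ (v 1)}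
          (fun u =>
            pseudoRisk L2 l2 u (pair ((p1 + p2) / 2) ((p1 + p2) / 2)) -
              pseudoRisk L2 l2 v (pair p1 p2)))


/-- The coupled logistic-regression loss `L_log(s,y) = −s_y + ln(∑ k e^{s_k})`. -/
def Llog (s : Fin K → ℝ) (y : Fin K) : ℝ :=
  -s y + Real.log (∑ k, Real.exp (s k))

/-- The adjustment `l(s) = ln(∑ k e^{s_k})` of the coupled logistic-regression loss. -/
def logAdj (s : Fin K → ℝ) : ℝ := Real.log (∑ k, Real.exp (s k))

/-- `−ln t` as an extended real, equal to `+∞` for `t ≤ 0`. -/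
def negLog (t : ℝ) : EReal := if t ≤ 0 then ⊤ else ((-Real.log t : ℝ) : EReal)

/-- The pointwise surrogate risk of the decoupled logistic-regression loss
`L_LR(s,y) = −ln s_y`, namely `−∑ k p_k ln s_k` (with value `+∞` whenever
`p_k > 0` and `s_k = 0` for some `k`). -/
def riskLR (s p : Fin K → ℝ) : EReal := ∑ k, (p k : EReal) * negLog (s k)

/-- `δ_max(ε,p)` for an extended-real-valued pointwise surrogate risk. -/
def deltaMaxPE (R : (Fin K → ℝ) → (Fin K → ℝ) → EReal) (S : Set (Fin K → ℝ))
    (ε : ℝ) (p : Fin K → ℝ) : EReal :=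
  einfE (Tset S ε p) (fun s => R s p) - einfE S (fun s => R s p)

/-- `δ_max(ε)` for an extended-real-valued pointwise surrogate risk. -/
def deltaMaxE (R : (Fin K → ℝ) → (Fin K → ℝ) → EReal) (S : Set (Fin K → ℝ))
    (ε : ℝ) : EReal :=
  sInf ((fun p => deltaMaxPE R S ε p) '' stdSimplex ℝ (Fin K))

/-- `δ_binary(ε)` for the binary decoupled logistic-regression loss on `Δ₂`. -/
def deltaBinaryLR (ε : ℝ) : EReal :=
  einfE (stdSimplex ℝ (Fin 2)) (fun u => riskLR u (pEps 0)) -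
    einfE (stdSimplex ℝ (Fin 2)) (fun v => riskLR v (pEps ε))

end Calib

namespace Calib

/-- The symmetry hypothesis for the transposition, tested at the vertices of the simplex. -/
lemma Symmetric.swap {S : Set (Fin 2 → ℝ)} {L : (Fin 2 → ℝ) → Fin 2 → ℝ}
    (h : Symmetric L S) {s : Fin 2 → ℝ} (hs : s ∈ S) :
    pair (s 1) (s 0) ∈ S ∧ L (pair (s 1) (s 0)) 0 = L s 1 ∧ L (pair (s 1) (s 0)) 1 = L s 0 := by
  obtain ⟨hm, hr⟩ := h (Equiv.swap 0 1) s hs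
  have e : s ∘ Equiv.swap 0 1 = pair (s 1) (s 0) := by
    funext k; fin_cases k <;> simp [pair]
  rw [e] at hm hr
  have a := hr (Pi.single 0 1) (single_mem_stdSimplex ℝ 0)
  have b := hr (Pi.single 1 1) (single_mem_stdSimplex ℝ 1)
  simp [risk, Fin.sum_univ_two] at a b
  exact ⟨hm, b.symm, a.symm⟩

lemma pseudoRisk_pEps (L : (Fin 2 → ℝ) → Fin 2 → ℝ) (l : (Fin 2 → ℝ) → ℝ) (ε : ℝ)
    (s : Fin 2 → ℝ) : pseudoRisk L l s (pEps ε) = risk L s (pEps ε) := by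
  simp [pseudoRisk, risk, pEps, pair, Fin.sum_univ_two]; ring

lemma einf_le {α : Type*} {A : Set α} {f : α → ℝ} {a : α} (ha : a ∈ A) :
    einf A f ≤ (f a : EReal) :=
  sInf_le ⟨a, ha, rfl⟩

lemma le_einf {α : Type*} {A : Set α} {f : α → ℝ} {c : EReal}
    (h : ∀ a ∈ A, c ≤ (f a : EReal)) : c ≤ einf A f := by
  refine le_sInf ?_
  rintro _ ⟨a, ha, rfl⟩
  exact h a ha

/-- At a score with equal coordinates the two losses agree, so the risk does not depend on `p`. -/
lemma risk_diag {S : Set (Fin 2 → ℝ)} {L : (Fin 2 → ℝ) → Fin 2 → ℝ} (hsym : Symmetric L S)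
    {s p : Fin 2 → ℝ} (hs : s ∈ S) (h01 : s 0 = s 1) (hp : p 0 + p 1 = 1) :
    risk L s p = risk L s (pEps 0) := by
  have e : pair (s 1) (s 0) = s := by
    funext k; fin_cases k <;> simp [pair, h01]
  have h := (hsym.swap hs).2.1
  rw [e] at h
  simp only [risk, pEps, pair, Fin.sum_univ_two, Matrix.cons_val_zero, Matrix.cons_val_one, h]
  linear_combination L s 1 * hp

/-- The infimum of the risk over the scores with equal coordinates is the optimal risk at the
uniform distribution, whatever the probability vector. -/
lemma einf_diag {S : Set (Fin 2 → ℝ)} {L : (Fin 2 → ℝ) → Fin 2 → ℝ}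
    (hconv : ∀ y : Fin 2, ConvexOn ℝ S (fun s => L s y)) (hsym : Symmetric L S)
    {p : Fin 2 → ℝ} (hp : p 0 + p 1 = 1) {i j : Fin 2} (hij : i ≠ j) :
    einf (Mset S i ∩ Mset S j) (fun s => risk L s p) =
      einf S (fun s => risk L s (pEps 0)) := by
  apply le_antisymm
  · refine le_einf fun s hs => ?_
    obtain ⟨hm, h0, h1⟩ := hsym.swap hs
    set t : Fin 2 → ℝ := (1 / 2 : ℝ) • s + (1 / 2 : ℝ) • pair (s 1) (s 0) with ht
    have htS : t ∈ S := (hconv 0).1 hs hm (by norm_num) (by norm_num) (by norm_num)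
    have ht01 : t 0 = t 1 := by
      simp only [ht, Pi.add_apply, Pi.smul_apply, smul_eq_mul]
      simp only [pair, Matrix.cons_val_zero, Matrix.cons_val_one]
      ring
    have hk : ∀ k k', t k = t k' := by
      intro k k'; fin_cases k <;> fin_cases k' <;> simp [ht01]
    have hle : risk L t p ≤ risk L s (pEps 0) := by
      rw [risk_diag hsym htS ht01 hp]
      have c0 := (hconv 0).2 hs hm (show (0 : ℝ) ≤ 1 / 2 by norm_num)
        (show (0 : ℝ) ≤ 1 / 2 by norm_num) (by norm_num)
      have c1 := (hconv 1).2 hs hm (show (0 : ℝ) ≤ 1 / 2 by norm_num)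
        (show (0 : ℝ) ≤ 1 / 2 by norm_num) (by norm_num)
      simp only [← ht, h0, h1, smul_eq_mul] at c0 c1
      simp only [risk, pEps, pair, Fin.sum_univ_two, Matrix.cons_val_zero, Matrix.cons_val_one]
      linarith
    have htM : t ∈ Mset S i ∩ Mset S j :=
      ⟨⟨htS, fun k => (hk k i).le⟩, ⟨htS, fun k => (hk k j).le⟩⟩
    refine (einf_le htM).trans ?_
    exact_mod_cast hle
  · refine le_einf fun s hs => ?_
    have hij' : s i = s j := le_antisymm (hs.2.2 i) (hs.1.2 j)
    have h01 : s 0 = s 1 := by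
      fin_cases i <;> fin_cases j <;> simp_all
    rw [risk_diag hsym hs.1.1 h01 hp]
    exact einf_le (f := fun s => risk L s (pEps 0)) hs.1.1

/-- The optimal risk decreases as the two probabilities move apart: `pEps ε` is a convex
combination of `p` and its swap. -/
lemma einf_le_pEps {S : Set (Fin 2 → ℝ)} {L : (Fin 2 → ℝ) → Fin 2 → ℝ} (hsym : Symmetric L S)
    {p : Fin 2 → ℝ} (hp : p 0 + p 1 = 1) {ε : ℝ} (hε : 0 < ε) (hd : ε ≤ |p 0 - p 1|) :
    einf S (fun s => risk L s p) ≤ einf S (fun s => risk L s (pEps ε)) := by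
  refine le_einf fun s hs => ?_
  obtain ⟨hm, h0, h1⟩ := hsym.swap hs
  have hd0 : p 0 - p 1 ≠ 0 := by
    intro h; rw [h, abs_zero] at hd; linarith
  set r : ℝ := ε / (p 0 - p 1) with hr
  have hrd : r * (p 0 - p 1) = ε := div_mul_cancel₀ _ hd0
  have hr1 : |r| ≤ 1 := by
    rw [hr, abs_div, abs_of_pos hε]
    exact div_le_one_of_le₀ hd (abs_nonneg _)
  obtain ⟨hra, hrb⟩ := abs_le.1 hr1
  have key : risk L s (pEps ε) =
      (1 + r) / 2 * risk L s p + (1 - r) / 2 * risk L (pair (s 1) (s 0)) p := by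
    simp only [risk, pEps, Fin.sum_univ_two, h0, h1]
    simp only [pair, Matrix.cons_val_zero, Matrix.cons_val_one]
    linear_combination (-(L s 0 - L s 1) / 2) * hrd - (L s 0 + L s 1) / 2 * hp
  have hmin : min (risk L s p) (risk L (pair (s 1) (s 0)) p) ≤ risk L s (pEps ε) := by
    have a := min_le_left (risk L s p) (risk L (pair (s 1) (s 0)) p)
    have b := min_le_right (risk L s p) (risk L (pair (s 1) (s 0)) p)
    rw [key]
    nlinarith
  rcases min_le_iff.1 hmin with h | h
  · exact (einf_le hs).trans (by exact_mod_cast h)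
  · exact (einf_le hm).trans (by exact_mod_cast h)

/-- Condition 1 reduces `deltaMaxP` to a difference of optimal risks. -/
lemma deltaMaxP_eq {S : Set (Fin 2 → ℝ)} {L : (Fin 2 → ℝ) → Fin 2 → ℝ}
    (hconv : ∀ y : Fin 2, ConvexOn ℝ S (fun s => L s y)) (hsym : Symmetric L S)
    (h1 : Cond1 L S) {p : Fin 2 → ℝ} (hp : p ∈ stdSimplex ℝ (Fin 2)) {ε : ℝ} (hε : 0 < ε)
    {i j : Fin 2} (hij : ε ≤ p i - p j) :
    deltaMaxP L S ε p =
      einf S (fun s => risk L s (pEps 0)) - einf S (fun s => risk L s p) := by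
  have hp1 : p 0 + p 1 = 1 := by simpa [Fin.sum_univ_two] using hp.2
  have hne : j ≠ i := by rintro rfl; linarith
  have hk : ∀ k, k = i ∨ k = j := by
    intro k; fin_cases i <;> fin_cases j <;> fin_cases k <;> simp_all
  have hi : i ∈ Jset 0 p := by
    refine ⟨⟨i, by simp⟩, fun k _ => ?_⟩
    rcases hk k with rfl | rfl <;> linarith
  have hj : j ∈ Jset ε p := by
    refine ⟨⟨i, hij⟩, fun k hsub => ?_⟩
    obtain ⟨y, hy⟩ := hsub
    rcases hk k with rfl | rfl <;> rcases hk y with rfl | rfl <;> linarith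
  rw [deltaMaxP, h1 ε hε.le p hp i hi j hj, einf_diag hconv hsym hp1 hne]

end Calib

open Calib in
theorem lemma_binaryTightness
    (S : Set (Fin 2 → ℝ)) (L : (Fin 2 → ℝ) → Fin 2 → ℝ) (l : (Fin 2 → ℝ) → ℝ)
    (hconv : ∀ y : Fin 2, ConvexOn ℝ S (fun s => L s y))
    (hlb : Calib.LowerBoundedRisk L S)
    (hsym : Calib.Symmetric L S)
    (h1 : Calib.Cond1 L S)
    (h3 : Calib.Cond3 L S l (Calib.deltaBinary L S l)) :
    ∀ ε : ℝ, 0 < ε → ε ≤ 1 →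
      Calib.deltaMax L S ε = Calib.deltaBinary L S l ε := by
  intro ε hε hε1
  have hmem : pEps ε ∈ stdSimplex ℝ (Fin 2) := by
    refine ⟨fun k => ?_, ?_⟩
    · fin_cases k <;> simp [pEps, pair] <;> linarith
    · simp [pEps, pair, Fin.sum_univ_two]; ring
  have hgap : ε ≤ pEps ε 0 - pEps ε 1 := by
    simp only [pEps, pair, Matrix.cons_val_zero, Matrix.cons_val_one]; linarith
  have hbin : deltaBinary L S l ε =
      einf S (fun s => risk L s (pEps 0)) - einf S (fun s => risk L s (pEps ε)) := by
    simp only [deltaBinary, pseudoRisk_pEps]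
  rw [hbin]
  apply le_antisymm
  · rw [← deltaMaxP_eq hconv hsym h1 hmem hε hgap]
    exact sInf_le ⟨_, hmem, rfl⟩
  · refine le_sInf ?_
    rintro _ ⟨p, hp, rfl⟩
    have hp1 : p 0 + p 1 = 1 := by simpa [Fin.sum_univ_two] using hp.2
    by_cases hsub : ∃ i j, ε ≤ p i - p j
    · obtain ⟨i, j, hij⟩ := hsub
      have hd : ε ≤ |p 0 - p 1| := by
        fin_cases i <;> fin_cases j <;> simp at hij
        · linarith
        · exact hij.trans (le_abs_self _)
        · rw [abs_sub_comm]; exact hij.trans (le_abs_self _)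
        · linarith
      simp only [deltaMaxP_eq hconv hsym h1 hp hε hij]
      exact EReal.sub_le_sub le_rfl (einf_le_pEps hsym hp1 hε hd)
    -- No index is `ε`-suboptimal: the constrained infimum is `⊤`.
    · have hT : Tset S ε p = ∅ := by
        refine Set.eq_empty_iff_forall_notMem.2 ?_
        rintro s ⟨j, ⟨y, hy⟩, -⟩
        exact hsub ⟨y, j, hy⟩
      rcases S.eq_empty_or_nonempty with rfl | ⟨s, hs⟩
      · simp [einf]
      · have hfin : einf S (fun s => risk L s p) ≠ ⊤ :=
          ((einf_le hs).trans_lt (EReal.coe_lt_top _)).ne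
        have htop : deltaMaxP L S ε p = ⊤ := by
          rw [deltaMaxP, hT]
          simp only [einf, Set.image_empty, sInf_empty] at hfin ⊢
          exact EReal.top_sub hfin
        simp only [htop]
        exact le_top
end
end

section
/- Let K = 3, let φ(t) := max(0, 1+t) + max(0, t − 1/2) (the hinge transformation with a kink at 1/2), and let L be the Lee–Lin–Wahba loss with this φ on the sum-to-zero score set S₀ ⊂ ℝ³. Then L is not classification-calibrated: there exist ε > 0 and p ∈ Δ₃ with max_k p_k − min_k p_k ≥ ε such that inf_{s ∈ T(S₀,ε,p)} R(s,p) = inf_{s ∈ S₀} R(s,p); consequently δ_max(ε) = 0 for this ε. -/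
/-!
Writing the risk as `R(s,p) = ∑ k, (1 - p_k) φ(s_k)`, take `p = (2/5, 3/10, 3/10)` and
`s* = (1/2, 1/2, -1)`. The subdifferentials of the three summands at `s*` are
`3/5·[1,2]`, `7/10·[1,2]` and `7/10·[0,1]`, all of which contain the Lagrange multiplier `7/10`
of the constraint `∑ k, s_k = 0`. Hence `s*` minimises the convex risk over the sum-to-zero set
(`kink_risk_lower`). Since the second coordinate of `s*` is maximal although `p_1 - p_2 = 1/10`,
`s*` also lies in `T(S₀, 1/10, p)`, so the two infima agree. Finally `δ_max(ε) ≥ 0` because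
`T ⊆ S₀` and the risk is bounded below (`kink_deltaMaxP_nonneg`), and this `p` attains `0`.
-/

open scoped BigOperators

noncomputable section

/-- The kink transformation `φ(t) = (1+t)₊ + (t − 1/2)₊`. -/
noncomputable def kinkHinge (t : ℝ) : ℝ := max 0 (1 + t) + max 0 (t - 1 / 2)

lemma kinkHinge_nonneg (t : ℝ) : 0 ≤ kinkHinge t :=
  add_nonneg (le_max_left _ _) (le_max_left _ _)

lemma kink_risk_eq (s p : Fin 3 → ℝ) :
    Calib.risk (Calib.LLW kinkHinge) s p =
      (p 1 + p 2) * kinkHinge (s 0) + (p 0 + p 2) * kinkHinge (s 1) +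
        (p 0 + p 1) * kinkHinge (s 2) := by
  have h0 : ({0}ᶜ : Finset (Fin 3)) = {1, 2} := by decide
  have h1 : ({1}ᶜ : Finset (Fin 3)) = {0, 2} := by decide
  have h2 : ({2}ᶜ : Finset (Fin 3)) = {0, 1} := by decide
  simp only [Calib.risk, Calib.LLW, Fin.sum_univ_three, h0, h1, h2]
  rw [Finset.sum_pair (by decide), Finset.sum_pair (by decide), Finset.sum_pair (by decide)]
  ring

lemma kink_risk_nonneg (s : Fin 3 → ℝ) {p : Fin 3 → ℝ} (hp : p ∈ stdSimplex ℝ (Fin 3)) :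
    0 ≤ Calib.risk (Calib.LLW kinkHinge) s p := by
  rw [kink_risk_eq]
  have h0 := hp.1 0
  have h1 := hp.1 1
  have h2 := hp.1 2
  have k0 := kinkHinge_nonneg (s 0)
  have k1 := kinkHinge_nonneg (s 1)
  have k2 := kinkHinge_nonneg (s 2)
  positivity

/-- The supporting line of `φ` at the kink `1/2` with slope `c`. -/
lemma kinkHinge_ge_half {c : ℝ} (h1 : 1 ≤ c) (h2 : c ≤ 2) (t : ℝ) :
    3 / 2 + c * (t - 1 / 2) ≤ kinkHinge t := by
  unfold kinkHinge
  have a := le_max_right 0 (1 + t)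
  have b := le_max_left 0 (t - 1 / 2)
  have b' := le_max_right 0 (t - 1 / 2)
  rcases le_total t (1 / 2) with h | h <;> nlinarith

/-- The value `39/20` is the risk of `(1/2, 1/2, -1)`, which is therefore a minimiser. The bound
is the sum of supporting lines of the three summands with common slope `7/10`. -/
lemma kink_risk_lower {s : Fin 3 → ℝ} (hs : s ∈ Calib.sumZero 3) :
    39 / 20 ≤ Calib.risk (Calib.LLW kinkHinge) s ![2 / 5, 3 / 10, 3 / 10] := by
  have hsum : s 0 + s 1 + s 2 = 0 := by
    simpa [Calib.sumZero, Fin.sum_univ_three] using hs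
  have h0 := kinkHinge_ge_half (c := 7 / 6) (by norm_num) (by norm_num) (s 0)
  have h1 := kinkHinge_ge_half (c := 1) le_rfl (by norm_num) (s 1)
  have h2 : 1 + s 2 ≤ kinkHinge (s 2) := by
    unfold kinkHinge
    linarith [le_max_right 0 (1 + s 2), le_max_left 0 (s 2 - 1 / 2)]
  simp only [kink_risk_eq, Matrix.cons_val]
  linarith

lemma kink_einf_ne_top (p : Fin 3 → ℝ) :
    Calib.einf (Calib.sumZero 3) (fun s => Calib.risk (Calib.LLW kinkHinge) s p) ≠ ⊤ := by
  have h : (0 : Fin 3 → ℝ) ∈ Calib.sumZero 3 := by simp [Calib.sumZero]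
  exact ((sInf_le (Set.mem_image_of_mem _ h)).trans_lt (EReal.coe_lt_top _)).ne

lemma kink_einf_ne_bot {p : Fin 3 → ℝ} (hp : p ∈ stdSimplex ℝ (Fin 3)) :
    Calib.einf (Calib.sumZero 3) (fun s => Calib.risk (Calib.LLW kinkHinge) s p) ≠ ⊥ := by
  have h : (0 : EReal) ≤
      Calib.einf (Calib.sumZero 3) (fun s => Calib.risk (Calib.LLW kinkHinge) s p) := by
    refine le_sInf ?_
    rintro _ ⟨s, -, rfl⟩
    exact EReal.coe_nonneg.2 (kink_risk_nonneg s hp)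
  exact (EReal.bot_lt_zero.trans_le h).ne'

/-- The infimum over `S₀` is finite, so the difference is not affected by the conventions for
`⊤ - ⊤` and `⊥ - ⊥` in `EReal`. -/
lemma kink_deltaMaxP_nonneg (ε : ℝ) {p : Fin 3 → ℝ} (hp : p ∈ stdSimplex ℝ (Fin 3)) :
    0 ≤ Calib.deltaMaxP (Calib.LLW kinkHinge) (Calib.sumZero 3) ε p := by
  refine (EReal.sub_nonneg (Or.inr (kink_einf_ne_top p)) (Or.inr (kink_einf_ne_bot hp))).2 ?_
  refine sInf_le_sInf (Set.image_mono ?_)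
  rintro s ⟨j, -, hs⟩
  exact hs.1

theorem prop_kinkNotCalibrated :
    ∃ ε : ℝ, 0 < ε ∧ ∃ p ∈ stdSimplex ℝ (Fin 3),
      (∃ y j : Fin 3, ε ≤ p y - p j) ∧
      Calib.einf (Calib.Tset (Calib.sumZero 3) ε p)
          (fun s => Calib.risk (Calib.LLW kinkHinge) s p) =
        Calib.einf (Calib.sumZero 3)
          (fun s => Calib.risk (Calib.LLW kinkHinge) s p) ∧
      Calib.deltaMax (Calib.LLW kinkHinge) (Calib.sumZero 3) ε = 0 := by
  have hp : (![2 / 5, 3 / 10, 3 / 10] : Fin 3 → ℝ) ∈ stdSimplex ℝ (Fin 3) := by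
    refine ⟨fun k => ?_, ?_⟩
    · fin_cases k <;> norm_num
    · simp only [Fin.sum_univ_three, Matrix.cons_val]
      norm_num
  have hgap : (1 / 10 : ℝ) ≤ (![2 / 5, 3 / 10, 3 / 10] : Fin 3 → ℝ) 0 -
      (![2 / 5, 3 / 10, 3 / 10] : Fin 3 → ℝ) 1 := by
    simp only [Matrix.cons_val]
    norm_num
  have hS : (![1 / 2, 1 / 2, -1] : Fin 3 → ℝ) ∈ Calib.sumZero 3 := by
    simp only [Calib.sumZero, Set.mem_setOf_eq, Fin.sum_univ_three, Matrix.cons_val]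
    norm_num
  have hT : (![1 / 2, 1 / 2, -1] : Fin 3 → ℝ) ∈
      Calib.Tset (Calib.sumZero 3) (1 / 10) ![2 / 5, 3 / 10, 3 / 10] := by
    refine ⟨1, ⟨0, hgap⟩, hS, fun k => ?_⟩
    fin_cases k <;> norm_num
  have hval : Calib.risk (Calib.LLW kinkHinge) ![1 / 2, 1 / 2, -1]
      ![2 / 5, 3 / 10, 3 / 10] = 39 / 20 := by
    simp only [kink_risk_eq, kinkHinge, Matrix.cons_val]
    norm_num
  have heq : Calib.einf (Calib.Tset (Calib.sumZero 3) (1 / 10) ![2 / 5, 3 / 10, 3 / 10])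
      (fun s => Calib.risk (Calib.LLW kinkHinge) s ![2 / 5, 3 / 10, 3 / 10]) =
      Calib.einf (Calib.sumZero 3)
        (fun s => Calib.risk (Calib.LLW kinkHinge) s ![2 / 5, 3 / 10, 3 / 10]) := by
    apply le_antisymm
    · refine (sInf_le (Set.mem_image_of_mem _ hT)).trans (le_sInf ?_)
      rintro _ ⟨s, hs, rfl⟩
      exact EReal.coe_le_coe_iff.2 (hval.trans_le (kink_risk_lower hs))
    · refine sInf_le_sInf (Set.image_mono ?_)
      rintro s ⟨j, -, hs⟩
      exact hs.1
  refine ⟨1 / 10, by norm_num, _, hp, ⟨0, 1, hgap⟩, heq, le_antisymm ?_ ?_⟩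
  · refine (sInf_le (Set.mem_image_of_mem _ hp)).trans ?_
    show Calib.deltaMaxP _ _ _ _ ≤ 0
    rw [Calib.deltaMaxP, heq]
    exact (EReal.sub_self (kink_einf_ne_top _) (kink_einf_ne_bot hp)).le
  · refine le_sInf ?_
    rintro _ ⟨q, hq, rfl⟩
    exact kink_deltaMaxP_nonneg _ hq
end
end

section
/- Let K ≥ 2 and let L be the background-discrimination loss with ψ, φ, F : ℝ → ℝ on a score set S ⊆ ℝ^K satisfying the swapping assumption. Assume L is convex and ψ is non-increasing. Then for all ε ≥ 0, all p ∈ Δ_K and every j_ε ∈ J(ε,p): inf_{s ∈ T(S,ε,p)} R(s,p) = inf_{s ∈ M(S,j_ε)} R(s,p). -/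
/-!
Since `M(S, je) ⊆ T(S, ε, p)`, only `≥` needs an argument. A score `s ∈ M(S, j)` with `j`
`ε`-suboptimal is sent by exchanging coordinates `je` and `j` to an element of `M(S, je)`.
As `p j ≤ p je` and `s je ≤ s j`, the rearrangement inequality for the non-increasing `ψ`
(`risk_BD_swap_le`) shows that the exchange does not increase the risk.
-/

open scoped BigOperators

noncomputable section

/-- Exchanging the scores of a label `j` and a more probable label `i` does not increase the risk,
provided `j` has the larger score: the background term is invariant under permuting the scores,
and the discrimination term only improves since `ψ` is non-increasing. -/
theorem risk_BD_swap_le {K : ℕ} (ψ φ F : ℝ → ℝ) (hψ : Antitone ψ) (s p : Fin K → ℝ)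
    (i j : Fin K) (hp : p j ≤ p i) (hs : s i ≤ s j) :
    Calib.risk (Calib.BD ψ φ F) (s ∘ Equiv.swap i j) p ≤ Calib.risk (Calib.BD ψ φ F) s p := by
  set σ := Equiv.swap i j with hσ
  have hback : ∑ k, φ (s (σ k)) = ∑ k, φ (s k) := Equiv.sum_comp σ (fun k => φ (s k))
  have hσσ : ∀ k, σ (σ k) = k := fun k => by simp [hσ]
  have h1 : ∑ k, p (σ k) * ψ (s k) = ∑ k, p k * ψ (s (σ k)) := by
    rw [← Equiv.sum_comp σ]
    simp only [hσσ]
  have h2 : ∑ k, p (σ k) * ψ (s (σ k)) = ∑ k, p k * ψ (s k) :=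
    Equiv.sum_comp σ (fun k => p k * ψ (s k))
  -- Expanded, this sum is twice the difference of the two discrimination terms.
  have h3 : 0 ≤ ∑ k, (p k - p (σ k)) * (ψ (s k) - ψ (s (σ k))) := by
    have hij := mul_nonneg (sub_nonneg.2 hp) (sub_nonneg.2 (hψ hs))
    refine Finset.sum_nonneg fun k _ => ?_
    by_cases hki : k = i
    · subst hki
      simpa [hσ] using hij
    by_cases hkj : k = j
    · subst hkj
      simp only [hσ, Equiv.swap_apply_right]
      linarith
    · simp [hσ, Equiv.swap_apply_of_ne_of_ne hki hkj]
  have h4 : ∑ k, (p k - p (σ k)) * (ψ (s k) - ψ (s (σ k))) =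
      ∑ k, p k * ψ (s k) - ∑ k, p k * ψ (s (σ k)) - ∑ k, p (σ k) * ψ (s k)
        + ∑ k, p (σ k) * ψ (s (σ k)) := by
    rw [← Finset.sum_sub_distrib, ← Finset.sum_sub_distrib, ← Finset.sum_add_distrib]
    exact Finset.sum_congr rfl fun k _ => by ring
  simp only [Calib.risk, Calib.BD, Function.comp_apply, hback, mul_add, Finset.sum_add_distrib]
  linarith

theorem lemma_ZhangInfAtJeps {K : ℕ} (hK : 2 ≤ K)
    (ψ φ F : ℝ → ℝ) (S : Set (Fin K → ℝ))
    (hswap : Calib.SwapAssump S)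
    (hconv : ∀ y : Fin K, ConvexOn ℝ (Set.univ : Set (Fin K → ℝ)) (fun s => Calib.BD ψ φ F s y))
    (hψ : Antitone ψ) :
    ∀ ε : ℝ, 0 ≤ ε → ∀ p ∈ stdSimplex ℝ (Fin K), ∀ je ∈ Calib.Jset ε p,
      Calib.einf (Calib.Tset S ε p) (fun s => Calib.risk (Calib.BD ψ φ F) s p) =
        Calib.einf (Calib.Mset S je) (fun s => Calib.risk (Calib.BD ψ φ F) s p) := by
  intro ε _ p _ je hje
  apply le_antisymm
  · exact sInf_le_sInf (Set.image_mono fun s hs => ⟨je, hje.1, hs⟩)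
  · refine le_sInf ?_
    rintro _ ⟨s, ⟨j, hj, hs⟩, rfl⟩
    refine (sInf_le (Set.mem_image_of_mem _ (hswap je j s hs))).trans ?_
    exact EReal.coe_le_coe_iff.2 (risk_BD_swap_le ψ φ F hψ s p je j (hje.2 j hj) (hs.2 je))
end
end

section
/- Let K ≥ 2 and let L be the background-discrimination loss with ψ, φ, F : ℝ → ℝ on a score set S ⊆ ℝ^K satisfying both the swapping assumption and the averaging assumption. Assume L is convex and ψ is non-increasing. Then Condition 1 holds: for all ε ≥ 0, all p ∈ Δ_K, every j₀ ∈ J(0,p) and every j_ε ∈ J(ε,p), inf_{s ∈ T(S,ε,p)} R(s,p) = inf_{s ∈ M(S,j_ε) ∩ M(S,j₀)} R(s,p). -/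
/-!
The inclusion `M(je) ∩ M(j0) ⊆ T` gives one inequality. For the other, a score `s ∈ M(j)` with `j`
an `ε`-suboptimal index is turned into a score in `M(je) ∩ M(j0)` without increasing the risk.

The `F`-term of the loss is invariant under permutations of the coordinates, so, `ψ` being
non-increasing, exchanging two coordinates so that the larger score goes to the more probable index
never increases the risk (`risk_swap_le`). This moves the maximum from `j` to `je`, and then the
second largest score to `j0`; that second exchange avoids the maximal coordinate and is a
composition of three exchanges allowed by the swapping assumption (`swap_mem_Mset`). Averaging the
coordinates `je` and `j0` then stays in `S`. The average is the midpoint of `s` and of `s` with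
coordinates `je`, `j0` exchanged, and the latter has no larger risk since `p je ≤ p j0`, so
convexity bounds the risk of the average by that of `s` (`risk_avg_le`).
-/

open scoped BigOperators

noncomputable section

namespace Calib

/-- A rearrangement inequality: exchanging two scores that are ordered opposite to the
probabilities does not increase the risk. -/
lemma risk_swap_le {K : ℕ} {ψ φ F : ℝ → ℝ} (hψ : Antitone ψ) {s p : Fin K → ℝ} {i j : Fin K}
    (hp : p j ≤ p i) (hs : s i ≤ s j) :
    risk (BD ψ φ F) (s ∘ Equiv.swap i j) p ≤ risk (BD ψ φ F) s p := by
  rcases eq_or_ne i j with rfl | hij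
  · simp
  have hφ : ∑ k, φ ((s ∘ Equiv.swap i j) k) = ∑ k, φ (s k) :=
    Equiv.sum_comp (Equiv.swap i j) (fun k => φ (s k))
  rw [← sub_nonneg]
  unfold risk BD
  rw [hφ, ← Finset.sum_sub_distrib, Finset.sum_eq_add i j hij]
  · simp only [Function.comp_apply, Equiv.swap_apply_left, Equiv.swap_apply_right]
    have := hψ hs
    nlinarith [mul_nonneg (sub_nonneg.2 hp) (sub_nonneg.2 this)]
  · intro k _ hk
    simp [Equiv.swap_apply_of_ne_of_ne hk.1 hk.2]
  · simp
  · simp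

lemma convexOn_risk {K : ℕ} {L : (Fin K → ℝ) → Fin K → ℝ}
    (hconv : ∀ y, ConvexOn ℝ (Set.univ : Set (Fin K → ℝ)) (fun s => L s y))
    {p : Fin K → ℝ} (hp : ∀ k, 0 ≤ p k) :
    ConvexOn ℝ (Set.univ : Set (Fin K → ℝ)) (fun s => risk L s p) := by
  refine ⟨convex_univ, fun x _ y _ a b ha hb hab => ?_⟩
  simp only [risk, smul_eq_mul, Finset.mul_sum, ← Finset.sum_add_distrib]
  refine Finset.sum_le_sum fun k _ => ?_
  have h := mul_le_mul_of_nonneg_left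
    ((hconv k).2 (Set.mem_univ x) (Set.mem_univ y) ha hb hab) (hp k)
  simp only [smul_eq_mul] at h
  linarith

lemma avgVec_eq {K : ℕ} (s : Fin K → ℝ) (i j : Fin K) :
    avgVec s i j = (1 / 2 : ℝ) • s + (1 / 2 : ℝ) • (s ∘ Equiv.swap i j) := by
  ext k
  simp only [avgVec, Pi.add_apply, Pi.smul_apply, Function.comp_apply, smul_eq_mul]
  by_cases hi : k = i
  · subst hi
    simp
    ring
  by_cases hj : k = j
  · subst hj
    simp
    ring
  simp [hi, hj, Equiv.swap_apply_of_ne_of_ne hi hj]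
  ring

lemma risk_avg_le {K : ℕ} {ψ φ F : ℝ → ℝ} (hψ : Antitone ψ)
    (hconv : ∀ y : Fin K, ConvexOn ℝ (Set.univ : Set (Fin K → ℝ)) (fun s => BD ψ φ F s y))
    {s p : Fin K → ℝ} (hp0 : ∀ k, 0 ≤ p k) {i j : Fin K} (hp : p j ≤ p i) (hs : s i ≤ s j) :
    risk (BD ψ φ F) (avgVec s i j) p ≤ risk (BD ψ φ F) s p := by
  have h := (convexOn_risk hconv hp0).2 (Set.mem_univ s) (Set.mem_univ (s ∘ Equiv.swap i j))
    (by norm_num : (0 : ℝ) ≤ 1 / 2) (by norm_num : (0 : ℝ) ≤ 1 / 2) (by norm_num)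
  have h2 := risk_swap_le (φ := φ) (F := F) hψ hp hs
  rw [avgVec_eq]
  simp only [smul_eq_mul] at h ⊢
  linarith

/-- Two coordinates `i`, `k` other than the maximal one `j` may be exchanged within `M(S,j)`:
the exchange is `(i j)(k i)(j k)`, each factor of which involves the current maximal index. -/
lemma swap_mem_Mset {K : ℕ} {S : Set (Fin K → ℝ)} (hswap : SwapAssump S) {s : Fin K → ℝ}
    {i j k : Fin K} (hs : s ∈ Mset S j) (hi : i ≠ j) (hk : k ≠ j) :
    s ∘ Equiv.swap k i ∈ Mset S j := by
  have h := hswap j k _ (hswap k i _ (hswap i j s hs))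
  convert h using 1
  ext l
  simp only [Function.comp_apply, Equiv.swap_apply_def]
  congr 1
  grind

/-- Every score in `M(S,j)` is dominated in risk by one in `M(S,je) ∩ M(S,j0)`, provided
`p j ≤ p je` and `j0` has maximal probability. -/
lemma exists_le_risk {K : ℕ} {ψ φ F : ℝ → ℝ} {S : Set (Fin K → ℝ)}
    (hswap : SwapAssump S) (havg : AvgAssump S)
    (hconv : ∀ y : Fin K, ConvexOn ℝ (Set.univ : Set (Fin K → ℝ)) (fun s => BD ψ φ F s y))
    (hψ : Antitone ψ) {p : Fin K → ℝ} (hp0 : ∀ k, 0 ≤ p k) {j je j0 : Fin K}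
    (hj : p j ≤ p je) (hj0 : ∀ i, p i ≤ p j0) {s : Fin K → ℝ} (hs : s ∈ Mset S j) :
    ∃ t ∈ Mset S je ∩ Mset S j0, risk (BD ψ φ F) t p ≤ risk (BD ψ φ F) s p := by
  have h1 : s ∘ Equiv.swap je j ∈ Mset S je := hswap je j s hs
  have r1 := risk_swap_le (φ := φ) (F := F) hψ hj (hs.2 je)
  generalize s ∘ Equiv.swap je j = u at h1 r1
  rcases eq_or_ne j0 je with rfl | hne
  · exact ⟨u, ⟨h1, h1⟩, r1⟩
  -- `i` carries the second largest score
  obtain ⟨i, hi, himax⟩ := Finset.exists_max_image (Finset.univ.erase je) u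
    ⟨j0, by simp [hne]⟩
  have hi' : i ≠ je := by simpa using hi
  have hmax : ∀ k, k ≠ je → u k ≤ u i := fun k hk => himax k (by simp [hk])
  have h2 : u ∘ Equiv.swap j0 i ∈ Mset S je := swap_mem_Mset hswap h1 hi' hne
  have r2 := risk_swap_le (φ := φ) (F := F) hψ (hj0 i) (hmax j0 hne)
  have hv : ∀ k, k ≠ je → (u ∘ Equiv.swap j0 i) k ≤ (u ∘ Equiv.swap j0 i) j0 := by
    intro k hk
    simp only [Function.comp_apply, Equiv.swap_apply_left]
    apply hmax
    rw [Equiv.swap_apply_def]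
    split_ifs <;> assumption
  generalize u ∘ Equiv.swap j0 i = v at h2 r2 hv
  rcases (h2.2 j0).lt_or_eq with hlt | heq
  · exact ⟨avgVec v j0 je, havg j0 je v h2 hv hlt,
      (risk_avg_le hψ hconv hp0 (hj0 je) hlt.le).trans (r2.trans r1)⟩
  · exact ⟨v, ⟨h2, h2.1, fun k => heq ▸ h2.2 k⟩, r2.trans r1⟩

end Calib

theorem lemma_ZhangCondInfAtJepsJ0 {K : ℕ} (hK : 2 ≤ K)
    (ψ φ F : ℝ → ℝ) (S : Set (Fin K → ℝ))
    (hswap : Calib.SwapAssump S) (havg : Calib.AvgAssump S)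
    (hconv : ∀ y : Fin K, ConvexOn ℝ (Set.univ : Set (Fin K → ℝ)) (fun s => Calib.BD ψ φ F s y))
    (hψ : Antitone ψ) :
    Calib.Cond1 (Calib.BD ψ φ F) S := by
  intro ε _ p hp j0 hj0 je hje
  apply le_antisymm
  · exact sInf_le_sInf (Set.image_mono fun s hs => ⟨je, hje.1, hs.1⟩)
  · apply le_sInf
    rintro _ ⟨s, ⟨j, hj, hs⟩, rfl⟩
    obtain ⟨t, ht, hle⟩ := Calib.exists_le_risk hswap havg hconv hψ hp.1 (hje.2 j hj)
      (fun i => hj0.2 i ⟨i, by simp⟩) hs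
    exact (sInf_le (Set.mem_image_of_mem _ ht)).trans (EReal.coe_le_coe_iff.2 hle)
end
end

section
/- Let K ≥ 2, S = ℝ^K, and let L be the decoupled background-discrimination loss L(s,y) = ψ(s_y) + Σ_{k=1}^K φ(s_k) with adjustment l(s) = Σ_{k=1}^K φ(s_k), where L is convex, ψ is non-increasing, and L is lower-bounded in risk. Let the binary counterpart be L₂(u,y) = ψ(u_y) + φ(u₁) + φ(u₂) on S₂ = ℝ² with adjustment l₂(u) = φ(u₁)+φ(u₂), so that R'₂(u,q) = q₁ψ(u₁) + q₂ψ(u₂) + φ(u₁) + φ(u₂). Then Condition 2 holds: for all i ≠ j and all p ∈ Δ_K, inf over s ∈ M(ℝ^K,i) ∩ M(ℝ^K,j) of sup over s' ∈ ℝ^K with s'_k = s_k for all k ∉ {i,j} of [R(s,p) − R(s',p)] is ≥ inf_{u ∈ ℝ²} sup_{v ∈ ℝ²} [R'₂(u, (p̄,p̄)) − R'₂(v, (p_i,p_j))], where p̄ = (p_i+p_j)/2. -/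
/-!
On the simplex the surrogate risk of the decoupled loss equals `∑ k, (p k * ψ (s k) + φ (s k))`
(`risk_decoupled`), so it is a sum of one-coordinate terms. If `s` has its maximum at both `i` and
`j`, then `s i = s j =: t`; changing only the coordinates `i` and `j` of `s` into `v 0` and `v 1`
alters the risk by exactly the difference of binary pseudo-risks at `u = (t, t)` and `v`. Hence the
inner supremum at `s` dominates the binary inner supremum at `(t, t)`, and taking infima gives
Condition 2.
-/

open scoped BigOperators

noncomputable section

theorem risk_decoupled {K : ℕ} (ψ φ : ℝ → ℝ) (s p : Fin K → ℝ)
    (hp : p ∈ stdSimplex ℝ (Fin K)) :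
    Calib.risk (Calib.BD ψ φ id) s p = ∑ k, (p k * ψ (s k) + φ (s k)) := by
  simp only [Calib.risk, Calib.BD, id, mul_add, Finset.sum_add_distrib, ← Finset.sum_mul]
  rw [hp.2, one_mul]

theorem pseudoRisk_decoupled (ψ φ : ℝ → ℝ) (u : Fin 2 → ℝ) (a b : ℝ) :
    Calib.pseudoRisk (Calib.BD ψ φ id) (fun u => φ (u 0) + φ (u 1)) u (Calib.pair a b) =
      (a * ψ (u 0) + φ (u 0)) + (b * ψ (u 1) + φ (u 1)) := by
  simp [Calib.pseudoRisk, Calib.BD, Calib.pair, Fin.sum_univ_two]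
  ring

/-- Two scores that agree off `{i, j}` have risks that differ only by the terms at `i` and `j`. -/
theorem risk_sub_risk {K : ℕ} (ψ φ : ℝ → ℝ) (s s' p : Fin K → ℝ)
    (hp : p ∈ stdSimplex ℝ (Fin K)) (i j : Fin K) (hij : i ≠ j)
    (h : ∀ k, k ≠ i → k ≠ j → s' k = s k) :
    Calib.risk (Calib.BD ψ φ id) s p - Calib.risk (Calib.BD ψ φ id) s' p =
      ((p i * ψ (s i) + φ (s i)) + (p j * ψ (s j) + φ (s j))) -
        ((p i * ψ (s' i) + φ (s' i)) + (p j * ψ (s' j) + φ (s' j))) := by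
  rw [risk_decoupled ψ φ s p hp, risk_decoupled ψ φ s' p hp, ← Finset.sum_sub_distrib,
    Fintype.sum_eq_add i j hij]
  · ring
  · rintro k ⟨hki, hkj⟩
    rw [h k hki hkj, sub_self]

theorem lemma_ZhangCondPairing {K : ℕ} (hK : 2 ≤ K) (ψ φ : ℝ → ℝ)
    (hconv : ∀ y : Fin K,
      ConvexOn ℝ (Set.univ : Set (Fin K → ℝ))
        (fun s => Calib.BD ψ φ id s y))
    (hψ : Antitone ψ)
    (hlb : Calib.LowerBoundedRisk (Calib.BD ψ φ id)
      (Set.univ : Set (Fin K → ℝ))) :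
    Calib.Cond2 (Calib.BD ψ φ id) (Set.univ : Set (Fin K → ℝ))
      (Calib.BD ψ φ id) (Set.univ : Set (Fin 2 → ℝ))
      (fun u => φ (u 0) + φ (u 1)) := by
  intro i j hij p hp
  apply le_sInf
  rintro _ ⟨s, ⟨⟨-, hi⟩, ⟨-, hj⟩⟩, rfl⟩
  have hs : s j = s i := le_antisymm (hi j) (hj i)
  -- The common maximal value of `s` gives the binary score on the diagonal.
  refine (sInf_le (Set.mem_image_of_mem _ (Set.mem_univ (Calib.pair (s i) (s i))))).trans ?_
  apply sSup_le
  rintro _ ⟨v, -, rfl⟩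
  apply le_sSup
  let s' : Fin K → ℝ := Function.update (Function.update s i (v 0)) j (v 1)
  have hs' : ∀ k, k ≠ i → k ≠ j → s' k = s k := fun k hki hkj => by simp [s', hki, hkj]
  have hsi : s' i = v 0 := by simp [s', hij]
  have hsj : s' j = v 1 := by simp [s']
  refine ⟨s', ⟨Set.mem_univ _, hs'⟩, ?_⟩
  simp only [risk_sub_risk ψ φ s s' p hp i j hij hs', pseudoRisk_decoupled, hsi, hsj, hs]
  congr 1
  simp [Calib.pair]
  ring
end
end

section
/- Let K ≥ 2 and let L(s,y) = ψ(s_y) + Σ_{k=1}^K φ(s_k) be the decoupled background-discrimination loss on S = ℝ^K, with L convex, ψ non-increasing, and L lower-bounded in risk. Let L₂(u,y) = ψ(u_y) + φ(u₁) + φ(u₂) on S₂ = ℝ² be its binary counterpart with adjustment l₂(u) = φ(u₁)+φ(u₂), and suppose L₂ satisfies Condition ZhangInf. Then for all ε ∈ (0,1], δ_max(ε) ≥ δ_binary(ε); moreover δ_max(ε) = δ_binary(ε) when K = 2. -/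
/-!
For `p` in the simplex the risk decouples: `R(s,p) = ∑ k, g (p k) (s k)` with
`g q t = q ψ(t) + φ(t)`, and the binary pseudo-risk is `g q₁ (u₁) + g q₂ (u₂)`. Put
`H q = inf_t g q t`. Lower-boundedness of the risk makes `H` finite on `[0,1]`, and as an infimum
of affine functions `H` is concave. Every infimum in the statement is then a sum of values of `H`;
in particular `δ_binary(ε) = 2 H(1/2) - H((1+ε)/2) - H((1-ε)/2)`.

If `s_j` is maximal although `p_y - p_j ≥ ε`, exchanging `s_j` and `s_y` does not increase the risk,
since `ψ` is non-increasing. Averaging the risks before and after the exchange gives the excess-risk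
bound `D(p_y, p_j)`, where `D(a, b) = 2 H((a+b)/2) - H a - H b` (`two_H_le`).
The condition on the constrained infimum expresses `D(m+d, m-d)` as a supremum over `v` of infima
over `t` with `2ψ(t) ≤ ψ(v₁) + ψ(v₂)` of a quantity affine in `m` with slope
`2ψ(t) - ψ(v₁) - ψ(v₂) ≤ 0`, so `D(m+d, m-d)` is non-increasing in `m` (`D_half_le`) and `m ≤ 1/2`
may be replaced by `1/2`. Concavity of `H` makes it non-decreasing in `d` (`H_spread`), so
`d ≥ ε/2` may be replaced by `ε/2`.

For `K = 2` the bound is attained in the limit at `p = p^ε` by the constant score vectors.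
-/

open scoped BigOperators

noncomputable section

namespace Calib

/-! ### Extended-real infima and suprema with finite values -/

lemma einf_eq_coe {α : Type*} {A : Set α} {f : α → ℝ} {m : ℝ} (h1 : ∀ a ∈ A, m ≤ f a)
    (h2 : ∀ η > 0, ∃ a ∈ A, f a < m + η) : einf A f = (m : EReal) := by
  apply le_antisymm
  · refine le_of_forall_gt fun c hc => ?_
    obtain ⟨x, hmx, hxc⟩ := EReal.lt_iff_exists_real_btwn.1 hc
    have hmx' : m < x := by exact_mod_cast hmx
    obtain ⟨a, ha, hfa⟩ := h2 (x - m) (by linarith)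
    refine lt_of_le_of_lt (sInf_le ⟨a, ha, rfl⟩) (lt_trans ?_ hxc)
    exact EReal.coe_lt_coe_iff.2 (by linarith)
  · refine le_sInf ?_
    rintro _ ⟨a, ha, rfl⟩
    exact EReal.coe_le_coe_iff.2 (h1 a ha)

lemma esupE_eq_coe {α : Type*} {A : Set α} {F : α → EReal} {f : α → ℝ} {m : ℝ}
    (hF : ∀ a, F a = (f a : EReal)) (h1 : ∀ a ∈ A, f a ≤ m)
    (h2 : ∀ η > 0, ∃ a ∈ A, m - η < f a) : esupE A F = (m : EReal) := by
  apply le_antisymm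
  · refine sSup_le ?_
    rintro _ ⟨a, ha, rfl⟩
    rw [hF]
    exact_mod_cast h1 a ha
  · refine le_of_forall_lt fun c hc => ?_
    obtain ⟨x, hcx, hxm⟩ := EReal.lt_iff_exists_real_btwn.1 hc
    have hxm' : x < m := by exact_mod_cast hxm
    obtain ⟨a, ha, hfa⟩ := h2 (m - x) (by linarith)
    refine lt_of_lt_of_le (lt_trans hcx ?_) (le_sSup ⟨a, ha, rfl⟩)
    rw [hF]
    exact_mod_cast (by linarith : x < f a)

/-! ### The one-coordinate risk and its infimum -/

/-- The contribution `q ψ(t) + φ(t)` to the risk of a class of probability `q` with score `t`. -/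
def g (ψ φ : ℝ → ℝ) (q t : ℝ) : ℝ := q * ψ t + φ t

/-- The infimum over scores of the one-coordinate risk; it is used only where `g ψ φ q` is bounded
below. -/
def H (ψ φ : ℝ → ℝ) (q : ℝ) : ℝ := ⨅ t, g ψ φ q t

variable {ψ φ : ℝ → ℝ}

lemma risk_eq {K : ℕ} {p : Fin K → ℝ} (hp : p ∈ stdSimplex ℝ (Fin K)) (s : Fin K → ℝ) :
    risk (BD ψ φ id) s p = ∑ k, g ψ φ (p k) (s k) := by
  simp only [risk, BD, g, id, mul_add, Finset.sum_add_distrib, ← Finset.sum_mul, hp.2, one_mul]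

lemma pseudoRisk_eq (u q : Fin 2 → ℝ) :
    pseudoRisk (BD ψ φ id) (fun u => φ (u 0) + φ (u 1)) u q
      = g ψ φ (q 0) (u 0) + g ψ φ (q 1) (u 1) := by
  simp only [pseudoRisk, BD, g, id, Fin.sum_univ_two]
  ring

/-- Every `q ∈ [0,1]` is a coordinate of some point of the simplex because `K ≥ 2`; freezing the
other scores at `0` bounds the remaining coordinate. -/
lemma bddBelow_g {K : ℕ} (hK : 2 ≤ K)
    (hlb : LowerBoundedRisk (BD ψ φ id) (Set.univ : Set (Fin K → ℝ)))
    {q : ℝ} (h0 : 0 ≤ q) (h1 : q ≤ 1) : BddBelow (Set.range (g ψ φ q)) := by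
  obtain ⟨B, hB⟩ := hlb
  let i0 : Fin K := ⟨0, by omega⟩
  let i1 : Fin K := ⟨1, by omega⟩
  have hne : i1 ≠ i0 := by simp [i0, i1]
  let p : Fin K → ℝ := Pi.single i0 q + Pi.single i1 (1 - q)
  have hp : p ∈ stdSimplex ℝ (Fin K) := by
    refine ⟨fun k => ?_, ?_⟩
    · have ha : 0 ≤ (Pi.single i0 q : Fin K → ℝ) := Pi.single_nonneg.2 h0
      have hb : 0 ≤ (Pi.single i1 (1 - q) : Fin K → ℝ) := Pi.single_nonneg.2 (by linarith)
      exact add_nonneg (ha k) (hb k)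
    · simp [p, Finset.sum_add_distrib]
  have hp0 : p i0 = q := by simp [p, Pi.single_eq_of_ne hne.symm]
  refine ⟨B - ∑ k ∈ Finset.univ.erase i0, g ψ φ (p k) 0, ?_⟩
  rintro _ ⟨t, rfl⟩
  have h := hB (Function.update 0 i0 t) trivial p hp
  rw [risk_eq hp, ← Finset.add_sum_erase _ _ (Finset.mem_univ i0)] at h
  have h' : ∑ k ∈ Finset.univ.erase i0, g ψ φ (p k) ((Function.update 0 i0 t : Fin K → ℝ) k)
      = ∑ k ∈ Finset.univ.erase i0, g ψ φ (p k) 0 := by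
    refine Finset.sum_congr rfl fun k hk => ?_
    rw [Function.update_of_ne (Finset.ne_of_mem_erase hk)]
    rfl
  rw [h', Function.update_self, hp0] at h
  linarith

/-- Lower-boundedness of all the one-coordinate risks with weight in `[0,1]`. -/
def Bdd (ψ φ : ℝ → ℝ) : Prop :=
  ∀ q : ℝ, 0 ≤ q → q ≤ 1 → BddBelow (Set.range (g ψ φ q))

lemma H_le (hb : Bdd ψ φ) {q : ℝ} (h0 : 0 ≤ q) (h1 : q ≤ 1) (t : ℝ) :
    H ψ φ q ≤ g ψ φ q t := ciInf_le (hb q h0 h1) t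

lemma exists_lt_H (q : ℝ) {η : ℝ} (hη : 0 < η) : ∃ t, g ψ φ q t < H ψ φ q + η :=
  exists_lt_of_ciInf_lt (by unfold H; linarith)

lemma H_concave (hb : Bdd ψ φ) {a b l : ℝ} (ha0 : 0 ≤ a) (ha1 : a ≤ 1) (hb0 : 0 ≤ b) (hb1 : b ≤ 1)
    (hl0 : 0 ≤ l) (hl1 : l ≤ 1) :
    l * H ψ φ a + (1 - l) * H ψ φ b ≤ H ψ φ (l * a + (1 - l) * b) := by
  refine le_ciInf fun t => ?_
  have h1 := mul_le_mul_of_nonneg_left (H_le hb ha0 ha1 t) hl0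
  have h2 := mul_le_mul_of_nonneg_left (H_le hb hb0 hb1 t) (sub_nonneg.2 hl1)
  unfold g at *
  linarith

lemma H_spread (hb : Bdd ψ φ) {m d e : ℝ} (he : 0 < e) (hed : e ≤ d) (h0 : 0 ≤ m - d)
    (h1 : m + d ≤ 1) : H ψ φ (m + d) + H ψ φ (m - d) ≤ H ψ φ (m + e) + H ψ φ (m - e) := by
  have hd : 0 < d := by linarith
  -- `l` is the weight with `m + e = l (m + d) + (1 - l) (m - d)`.
  obtain ⟨l, hl⟩ : ∃ l, l = (d + e) / (2 * d) := ⟨_, rfl⟩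
  have hl' : l * (2 * d) = d + e := by rw [hl]; field_simp
  have hl0 : 0 ≤ l := by rw [hl]; positivity
  have hl1 : l ≤ 1 := by rw [hl, div_le_one (by positivity)]; linarith
  have k1 := H_concave hb (a := m + d) (b := m - d) (by linarith) h1 h0 (by linarith) hl0 hl1
  have k2 := H_concave hb (a := m - d) (b := m + d) h0 (by linarith) (by linarith) h1 hl0 hl1
  rw [show l * (m + d) + (1 - l) * (m - d) = m + e by linarith] at k1
  rw [show l * (m - d) + (1 - l) * (m + d) = m - e by linarith] at k2
  linarith

/-- Giving the larger score `t` to the less likely class costs at least twice the optimal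
one-coordinate risk at the average probability. -/
lemma two_H_le (hψ : Antitone ψ) (hb : Bdd ψ φ) {a b t r : ℝ} (hb0 : 0 ≤ b) (hab : b ≤ a)
    (h1 : a + b ≤ 1) (htr : r ≤ t) :
    2 * H ψ φ ((a + b) / 2) ≤ g ψ φ a r + g ψ φ b t := by
  have k1 := H_le hb (q := (a + b) / 2) (by linarith) (by linarith) t
  have k2 := H_le hb (q := (a + b) / 2) (by linarith) (by linarith) r
  have k3 := mul_nonneg (sub_nonneg.2 hab) (sub_nonneg.2 (hψ htr))
  unfold g at *
  linarith

/-! ### Infima of separable sums -/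

lemma einf_sum {K : ℕ} (hb : Bdd ψ φ) {p : Fin K → ℝ} (h0 : ∀ k, 0 ≤ p k) (h1 : ∀ k, p k ≤ 1)
    (c : ℝ) :
    einf Set.univ (fun s : Fin K → ℝ => ∑ k, g ψ φ (p k) (s k) - c)
      = ((∑ k, H ψ φ (p k) - c : ℝ) : EReal) := by
  refine einf_eq_coe (fun s _ => ?_) fun η hη => ?_
  · gcongr with k
    exact H_le hb (h0 k) (h1 k) _
  · -- An error of `η / (K + 1)` in each of the `K` coordinates stays below `η` in total.
    have hη' : 0 < η / (K + 1) := by positivity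
    choose t ht using fun k => exists_lt_H (ψ := ψ) (φ := φ) (p k) hη'
    refine ⟨t, trivial, ?_⟩
    have h : ∑ k, g ψ φ (p k) (t k) ≤ ∑ k, (H ψ φ (p k) + η / (K + 1)) :=
      Finset.sum_le_sum fun k _ => (ht k).le
    rw [Finset.sum_add_distrib, Finset.sum_const, Finset.card_univ, Fintype.card_fin,
      nsmul_eq_mul] at h
    have h2 : (K : ℝ) * (η / (K + 1)) < η := by
      rw [mul_div_assoc', div_lt_iff₀ (by positivity)]
      nlinarith
    linarith

lemma einf_pseudoRisk (hb : Bdd ψ φ) {a b : ℝ} (ha0 : 0 ≤ a) (ha1 : a ≤ 1) (hb0 : 0 ≤ b)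
    (hb1 : b ≤ 1) (c : ℝ) :
    einf Set.univ (fun u => pseudoRisk (BD ψ φ id) (fun u => φ (u 0) + φ (u 1)) u (pair a b) - c)
      = ((H ψ φ a + H ψ φ b - c : ℝ) : EReal) := by
  have h := einf_sum (p := pair a b) hb (by simp [Fin.forall_fin_two, pair, ha0, hb0])
    (by simp [Fin.forall_fin_two, pair, ha1, hb1]) c
  simpa only [Fin.sum_univ_two, pseudoRisk_eq, pair, Matrix.cons_val_zero, Matrix.cons_val_one]
    using h

/-! ### Consequences of the condition on the constrained infimum -/

lemma sup_inf_eq (hb : Bdd ψ φ) {a b : ℝ} (ha0 : 0 ≤ a) (ha1 : a ≤ 1) (hb0 : 0 ≤ b)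
    (hb1 : b ≤ 1) :
    esupE (Set.univ : Set (Fin 2 → ℝ)) (fun v => einf Set.univ (fun u =>
        pseudoRisk (BD ψ φ id) (fun u => φ (u 0) + φ (u 1)) u (pair ((a + b) / 2) ((a + b) / 2)) -
          pseudoRisk (BD ψ φ id) (fun u => φ (u 0) + φ (u 1)) v (pair a b)))
      = ((2 * H ψ φ ((a + b) / 2) - H ψ φ a - H ψ φ b : ℝ) : EReal) := by
  refine esupE_eq_coe (fun v => einf_pseudoRisk hb (by linarith) (by linarith) (by linarith)
    (by linarith) _) (fun v _ => ?_) fun η hη => ?_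
  · have k1 := H_le hb ha0 ha1 (v 0)
    have k2 := H_le hb hb0 hb1 (v 1)
    simp only [pseudoRisk_eq, pair, Matrix.cons_val_zero, Matrix.cons_val_one]
    linarith
  · obtain ⟨t, ht⟩ := exists_lt_H (ψ := ψ) (φ := φ) a (half_pos hη)
    obtain ⟨r, hr⟩ := exists_lt_H (ψ := ψ) (φ := φ) b (half_pos hη)
    refine ⟨![t, r], trivial, ?_⟩
    simp only [pseudoRisk_eq, pair, Matrix.cons_val_zero, Matrix.cons_val_one]
    linarith

/-- The binary excess risk at `(a, b)` decreases when both weights are raised by the same amount to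
have sum `1`: on the constraint set of the condition the compared quantity is affine in the mean
weight with non-positive slope. -/
lemma D_half_le (hb : Bdd ψ φ)
    (hZ : CondZhangInf ψ (BD ψ φ id) (Set.univ : Set (Fin 2 → ℝ)) (fun u => φ (u 0) + φ (u 1)))
    {a b : ℝ} (hb0 : 0 ≤ b) (hab : b ≤ a) (h1 : a + b ≤ 1) :
    2 * H ψ φ (1 / 2) - H ψ φ (1 / 2 + (a - b) / 2) - H ψ φ (1 / 2 - (a - b) / 2)
      ≤ 2 * H ψ φ ((a + b) / 2) - H ψ φ a - H ψ φ b := by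
  set a' := 1 / 2 + (a - b) / 2 with ha'
  set b' := 1 / 2 - (a - b) / 2 with hb'
  have e1 := sup_inf_eq hb (a := a) (b := b) (by linarith) (by linarith) hb0 (by linarith)
  have e2 := sup_inf_eq hb (a := a') (b := b') (by linarith) (by linarith) (by linarith)
    (by linarith)
  rw [hZ a b (by linarith) hb0] at e1
  rw [hZ a' b' (by linarith) (by linarith)] at e2
  have hs : (a' + b') / 2 = 1 / 2 := by rw [ha', hb']; ring
  rw [hs] at e2
  rw [← EReal.coe_le_coe_iff, ← e1, ← e2]
  refine sSup_le ?_
  rintro _ ⟨v, -, rfl⟩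
  refine le_trans ?_ (le_sSup ⟨v, trivial, rfl⟩)
  refine le_sInf ?_
  rintro _ ⟨u, hu, rfl⟩
  refine le_trans (sInf_le ⟨u, hu, rfl⟩) ?_
  obtain ⟨-, hu1, hu2⟩ := hu
  rw [EReal.coe_le_coe_iff]
  simp only [pseudoRisk_eq, pair, Matrix.cons_val_zero, Matrix.cons_val_one, g, ha', hb']
  have k := mul_nonneg (by linarith : (0 : ℝ) ≤ 1 - (a + b)) (sub_nonneg.2 hu2)
  linarith

lemma D_eps_le (hb : Bdd ψ φ)
    (hZ : CondZhangInf ψ (BD ψ φ id) (Set.univ : Set (Fin 2 → ℝ)) (fun u => φ (u 0) + φ (u 1)))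
    {a b ε : ℝ} (hε : 0 < ε) (hb0 : 0 ≤ b) (hab : ε ≤ a - b) (h1 : a + b ≤ 1) :
    2 * H ψ φ (1 / 2) - H ψ φ ((1 + ε) / 2) - H ψ φ ((1 - ε) / 2)
      ≤ 2 * H ψ φ ((a + b) / 2) - H ψ φ a - H ψ φ b := by
  have k1 := D_half_le hb hZ hb0 (by linarith) h1
  have k2 := H_spread hb (m := 1 / 2) (d := (a - b) / 2) (e := ε / 2) (by linarith) (by linarith)
    (by linarith) (by linarith)
  rw [show (1 : ℝ) / 2 + ε / 2 = (1 + ε) / 2 by ring,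
    show (1 : ℝ) / 2 - ε / 2 = (1 - ε) / 2 by ring] at k2
  linarith

lemma deltaBinary_eq (hb : Bdd ψ φ) {ε : ℝ} (hε : 0 < ε) (h1 : ε ≤ 1) :
    deltaBinary (BD ψ φ id) Set.univ (fun u => φ (u 0) + φ (u 1)) ε
      = ((2 * H ψ φ (1 / 2) - H ψ φ ((1 + ε) / 2) - H ψ φ ((1 - ε) / 2) : ℝ) : EReal) := by
  have k1 := einf_pseudoRisk hb (a := (1 + 0) / 2) (b := (1 - 0) / 2) (by norm_num) (by norm_num)
    (by norm_num) (by norm_num) 0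
  have k2 := einf_pseudoRisk hb (a := (1 + ε) / 2) (b := (1 - ε) / 2) (by linarith) (by linarith)
    (by linarith) (by linarith) 0
  simp only [sub_zero] at k1 k2
  simp only [deltaBinary, pEps, sub_zero]
  rw [k1, k2, ← EReal.coe_sub]
  congr 1
  rw [add_zero]
  ring

lemma einf_risk {K : ℕ} (hb : Bdd ψ φ) {p : Fin K → ℝ} (hp : p ∈ stdSimplex ℝ (Fin K)) :
    einf Set.univ (fun s => risk (BD ψ φ id) s p) = ((∑ k, H ψ φ (p k) : ℝ) : EReal) := by
  have h := einf_sum (p := p) hb hp.1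
    (fun k => hp.2 ▸ Finset.single_le_sum (fun i _ => hp.1 i) (Finset.mem_univ k)) 0
  simpa only [risk_eq hp, sub_zero] using h

lemma le_deltaMax {K : ℕ} (hψ : Antitone ψ) (hb : Bdd ψ φ)
    (hZ : CondZhangInf ψ (BD ψ φ id) (Set.univ : Set (Fin 2 → ℝ)) (fun u => φ (u 0) + φ (u 1)))
    {ε : ℝ} (hε : 0 < ε) :
    ((2 * H ψ φ (1 / 2) - H ψ φ ((1 + ε) / 2) - H ψ φ ((1 - ε) / 2) : ℝ) : EReal)
      ≤ deltaMax (BD ψ φ id) (Set.univ : Set (Fin K → ℝ)) ε := by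
  refine le_sInf ?_
  rintro _ ⟨p, hp, rfl⟩
  set D := 2 * H ψ φ (1 / 2) - H ψ φ ((1 + ε) / 2) - H ψ φ ((1 - ε) / 2) with hD
  have key : ((D + ∑ k, H ψ φ (p k) : ℝ) : EReal)
      ≤ einf (Tset Set.univ ε p) (fun s => risk (BD ψ φ id) s p) := by
    refine le_sInf ?_
    rintro _ ⟨s, ⟨j, ⟨y, hy⟩, -, hs⟩, rfl⟩
    simp only [risk_eq hp, EReal.coe_le_coe_iff]
    have hyj : y ≠ j := by
      rintro rfl
      linarith
    have split : ∀ f : Fin K → ℝ,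
        ∑ k, f k = f y + f j + ∑ k ∈ (Finset.univ.erase y).erase j, f k := fun f => by
      rw [← Finset.add_sum_erase _ _ (Finset.mem_univ y),
        ← Finset.add_sum_erase _ _ (Finset.mem_erase.2 ⟨hyj.symm, Finset.mem_univ j⟩), add_assoc]
    have hle1 : ∀ k, p k ≤ 1 := fun k =>
      hp.2 ▸ Finset.single_le_sum (fun i _ => hp.1 i) (Finset.mem_univ k)
    have hsum : p y + p j ≤ 1 := by
      have h1 := split p
      have h2 : 0 ≤ ∑ k ∈ (Finset.univ.erase y).erase j, p k :=
        Finset.sum_nonneg fun k _ => hp.1 k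
      have h3 := hp.2
      linarith
    have hrest : ∑ k ∈ (Finset.univ.erase y).erase j, H ψ φ (p k)
        ≤ ∑ k ∈ (Finset.univ.erase y).erase j, g ψ φ (p k) (s k) :=
      Finset.sum_le_sum fun k _ => H_le hb (hp.1 k) (hle1 k) _
    have k1 := D_eps_le hb hZ hε (hp.1 j) hy hsum
    have k2 := two_H_le hψ hb (hp.1 j) (by linarith) hsum (hs y)
    rw [split (fun k => H ψ φ (p k)), split (fun k => g ψ φ (p k) (s k))]
    linarith
  simp only [deltaMaxP]
  rw [einf_risk hb hp]
  calc (D : EReal) = ((D + ∑ k, H ψ φ (p k) : ℝ) : EReal) - ((∑ k, H ψ φ (p k) : ℝ) : EReal) := by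
        rw [← EReal.coe_sub, add_sub_cancel_right]
    _ ≤ _ := EReal.sub_le_sub key le_rfl

lemma deltaMax_two_le (hb : Bdd ψ φ) {ε : ℝ} (hε : 0 < ε) (h1 : ε ≤ 1) :
    deltaMax (BD ψ φ id) (Set.univ : Set (Fin 2 → ℝ)) ε
      ≤ ((2 * H ψ φ (1 / 2) - H ψ φ ((1 + ε) / 2) - H ψ φ ((1 - ε) / 2) : ℝ) : EReal) := by
  have hp : pEps ε ∈ stdSimplex ℝ (Fin 2) := by
    refine ⟨?_, ?_⟩
    · simp only [Fin.forall_fin_two, pEps, pair, Matrix.cons_val_zero, Matrix.cons_val_one]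
      constructor <;> linarith
    · simp only [Fin.sum_univ_two, pEps, pair, Matrix.cons_val_zero, Matrix.cons_val_one]
      ring
  have key : einf (Tset Set.univ ε (pEps ε)) (fun s => risk (BD ψ φ id) s (pEps ε))
      ≤ ((2 * H ψ φ (1 / 2) : ℝ) : EReal) := by
    refine le_of_forall_gt fun c hc => ?_
    obtain ⟨x, hmx, hxc⟩ := EReal.lt_iff_exists_real_btwn.1 hc
    have hmx' : 2 * H ψ φ (1 / 2) < x := by exact_mod_cast hmx
    obtain ⟨t, ht⟩ := exists_lt_H (ψ := ψ) (φ := φ) (1 / 2)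
      (η := (x - 2 * H ψ φ (1 / 2)) / 2) (by linarith)
    -- A constant score vector belongs to every `M(S,j)`, so to that of the less likely class.
    refine lt_of_le_of_lt (sInf_le ⟨fun _ => t, ⟨1, ⟨0, ?_⟩, trivial, fun _ => le_rfl⟩, rfl⟩)
      (lt_trans ?_ hxc)
    · simp only [pEps, pair, Matrix.cons_val_zero, Matrix.cons_val_one]
      linarith
    · simp only [risk_eq hp, EReal.coe_lt_coe_iff]
      simp only [Fin.sum_univ_two, pEps, pair, Matrix.cons_val_zero, Matrix.cons_val_one, g] at ht ⊢
      linarith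
  refine le_trans (sInf_le ⟨pEps ε, hp, rfl⟩) ?_
  simp only [deltaMaxP]
  rw [einf_risk hb hp]
  refine le_trans (EReal.sub_le_sub key le_rfl) ?_
  rw [← EReal.coe_sub, EReal.coe_le_coe_iff]
  simp only [Fin.sum_univ_two, pEps, pair, Matrix.cons_val_zero, Matrix.cons_val_one]
  linarith

end Calib

theorem thm_lZhang {K : ℕ} (hK : 2 ≤ K) (ψ φ : ℝ → ℝ)
    (hconv : ∀ y : Fin K,
      ConvexOn ℝ (Set.univ : Set (Fin K → ℝ)) (fun s => Calib.BD ψ φ id s y))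
    (hψ : Antitone ψ)
    (hlb : Calib.LowerBoundedRisk (Calib.BD ψ φ id)
      (Set.univ : Set (Fin K → ℝ)))
    (hZ : Calib.CondZhangInf ψ (Calib.BD ψ φ id)
      (Set.univ : Set (Fin 2 → ℝ)) (fun u => φ (u 0) + φ (u 1))) :
    ∀ ε : ℝ, 0 < ε → ε ≤ 1 →
      (Calib.deltaBinary (Calib.BD ψ φ id) (Set.univ : Set (Fin 2 → ℝ))
          (fun u => φ (u 0) + φ (u 1)) ε ≤
        Calib.deltaMax (Calib.BD ψ φ id) (Set.univ : Set (Fin K → ℝ)) ε) ∧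
      (K = 2 →
        Calib.deltaMax (Calib.BD ψ φ id) (Set.univ : Set (Fin K → ℝ)) ε =
          Calib.deltaBinary (Calib.BD ψ φ id) (Set.univ : Set (Fin 2 → ℝ))
            (fun u => φ (u 0) + φ (u 1)) ε) := by
  have hb : Calib.Bdd ψ φ := fun q h0 h1 => Calib.bddBelow_g hK hlb h0 h1
  intro ε hε h1
  rw [Calib.deltaBinary_eq hb hε h1]
  refine ⟨Calib.le_deltaMax hψ hb hZ hε, ?_⟩
  rintro rfl
  exact le_antisymm (Calib.deltaMax_two_le hb hε h1) (Calib.le_deltaMax hψ hb hZ hε)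
end
end

section
/- Let K ≥ 2. Let L_log be the coupled logistic-regression loss on ℝ^K and L_LR the decoupled logistic-regression loss on Δ_K. Then for every p ∈ Δ_K and every j ∈ {1,…,K}: inf_{s ∈ M(ℝ^K, j)} R_log(s,p) = inf_{s ∈ M(Δ_K, j)} R_LR(s,p), where R_log and R_LR denote the respective pointwise surrogate risks. -/
/-!
The softmax map `s ↦ (e^{s_k} / ∑ i e^{s_i})_k` sends `M(ℝ^K, j)` into the points of `M(Δ_K, j)`
with positive coordinates, and carries the coupled risk to the decoupled one; hence the infimum
over the simplex is at most the infimum over `ℝ^K` (`riskLR_softmax`, `softmax_mem`).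

Conversely, let `t ∈ M(Δ_K, j)` have finite decoupled risk `r`. For `0 < c < 1` the mixture
`u = c t + (1 - c) / K` of `t` with the uniform distribution is positive, still lies in
`M(Δ_K, j)`, and satisfies `u_k ≥ c t_k`. The scores `s_k = ln u_k` lie in `M(ℝ^K, j)` and their
coupled risk is `-∑ p_k ln u_k ≤ r - ln c` (`exists_risk_le`). Letting `c → 1` gives the other
inequality. The points `t` of infinite risk are irrelevant (`riskLR_eq_top`).
-/

open scoped BigOperators

noncomputable section

namespace Calib

lemma coe_sum_ereal {ι : Type*} (A : Finset ι) (f : ι → ℝ) :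
    ((∑ i ∈ A, f i : ℝ) : EReal) = ∑ i ∈ A, (f i : EReal) := by
  classical
  induction A using Finset.induction_on with
  | empty => simp
  | insert a A ha ih => rw [Finset.sum_insert ha, Finset.sum_insert ha, EReal.coe_add, ih]

/-- The decoupled risk is the real number `-∑ p_k ln t_k` as soon as `t` is positive on the support
of `p`. Where `p_k = 0`, the value of `Real.log (t k)` is immaterial. -/
lemma riskLR_eq_coe {K : ℕ} {t p : Fin K → ℝ} (h : ∀ k, p k = 0 ∨ 0 < t k) :
    riskLR t p = ((∑ k, p k * -Real.log (t k) : ℝ) : EReal) := by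
  rw [coe_sum_ereal]
  refine Finset.sum_congr rfl fun k _ => ?_
  rcases h k with h0 | hpos
  · simp [h0]
  · rw [negLog, if_neg (not_le.mpr hpos), EReal.coe_mul]

lemma negLog_nonneg {x : ℝ} (hx : x ≤ 1) : 0 ≤ negLog x := by
  unfold negLog
  split_ifs with h
  · exact le_top
  · have := Real.log_nonpos (not_le.mp h).le hx
    exact_mod_cast neg_nonneg.mpr this

lemma riskLR_eq_top {K : ℕ} {t p : Fin K → ℝ} (hp : p ∈ stdSimplex ℝ (Fin K))
    (ht : t ∈ stdSimplex ℝ (Fin K)) {k : Fin K} (hpk : p k ≠ 0) (htk : t k ≤ 0) :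
    riskLR t p = ⊤ := by
  have hnonneg : ∀ i ∈ Finset.univ, 0 ≤ (p i : EReal) * negLog (t i) := fun i _ =>
    mul_nonneg (EReal.coe_nonneg.mpr (hp.1 i))
      (negLog_nonneg (ht.2 ▸ Finset.single_le_sum (fun m _ => ht.1 m) (Finset.mem_univ i)))
  have hle := Finset.single_le_sum hnonneg (Finset.mem_univ k)
  rw [negLog, if_pos htk,
    EReal.coe_mul_top_of_pos (lt_of_le_of_ne (hp.1 k) (Ne.symm hpk))] at hle
  exact top_le_iff.mp hle

/-- The softmax of a score vector. -/
def softmax {K : ℕ} (s : Fin K → ℝ) : Fin K → ℝ :=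
  fun k => Real.exp (s k) / ∑ i, Real.exp (s i)

lemma sum_exp_pos {K : ℕ} (s : Fin K → ℝ) (j : Fin K) : 0 < ∑ i, Real.exp (s i) :=
  Finset.sum_pos (fun _ _ => Real.exp_pos _) ⟨j, Finset.mem_univ j⟩

lemma softmax_mem {K : ℕ} {s : Fin K → ℝ} {j : Fin K} (hs : s ∈ Mset Set.univ j) :
    softmax s ∈ Mset (stdSimplex ℝ (Fin K)) j := by
  have hZ := sum_exp_pos s j
  refine ⟨⟨fun k => (div_pos (Real.exp_pos _) hZ).le, ?_⟩, fun k => ?_⟩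
  · unfold softmax
    rw [← Finset.sum_div, div_self hZ.ne']
  · exact div_le_div_of_nonneg_right (Real.exp_le_exp.mpr (hs.2 k)) hZ.le

lemma riskLR_softmax {K : ℕ} (s p : Fin K → ℝ) :
    riskLR (softmax s) p = (risk Llog s p : EReal) := by
  have hpos : ∀ k, 0 < softmax s k := fun k => div_pos (Real.exp_pos _) (sum_exp_pos s k)
  rw [riskLR_eq_coe fun k => Or.inr (hpos k), risk]
  congr 1
  refine Finset.sum_congr rfl fun k _ => ?_
  rw [softmax, Real.log_div (Real.exp_pos _).ne' (sum_exp_pos s k).ne', Real.log_exp, Llog]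
  ring

/-- The logarithms of the mixture `c t + (1 - c) / K` are scores in `M(ℝ^K, j)` whose coupled risk
exceeds the decoupled risk of `t` by at most `-ln c`. -/
lemma exists_risk_le {K : ℕ} {t p : Fin K → ℝ} {j : Fin K} (hp : p ∈ stdSimplex ℝ (Fin K))
    (ht : t ∈ Mset (stdSimplex ℝ (Fin K)) j) (h : ∀ k, p k = 0 ∨ 0 < t k)
    {c : ℝ} (hc0 : 0 < c) (hc1 : c < 1) :
    ∃ s ∈ Mset (Set.univ : Set (Fin K → ℝ)) j,
      risk Llog s p ≤ ∑ k, p k * -Real.log (t k) - Real.log c := by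
  have hK : (0 : ℝ) < K := by exact_mod_cast j.pos
  set u : Fin K → ℝ := fun k => c * t k + (1 - c) / K with hu
  have hw : 0 < (1 - c) / K := div_pos (by linarith) hK
  have hupos : ∀ k, 0 < u k := fun k => by
    have := mul_nonneg hc0.le (ht.1.1 k)
    simp only [hu]
    linarith
  have husum : ∑ k, u k = 1 := by
    simp only [hu, Finset.sum_add_distrib, ← Finset.mul_sum, ht.1.2, Finset.sum_const,
      Finset.card_univ, Fintype.card_fin, nsmul_eq_mul]
    field_simp
    ring
  refine ⟨fun k => Real.log (u k), ⟨Set.mem_univ _, fun k => ?_⟩, ?_⟩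
  · refine Real.log_le_log (hupos k) ?_
    have := mul_le_mul_of_nonneg_left (ht.2 k) hc0.le
    simp only [hu]
    linarith
  · have hbound : ∀ k ∈ Finset.univ, p k * Llog (fun i => Real.log (u i)) k ≤
        p k * -Real.log (t k) - p k * Real.log c := fun k _ => by
      -- The normalising term of the coupled loss vanishes because `u` sums to one.
      have hL : Llog (fun i => Real.log (u i)) k = -Real.log (u k) := by
        simp only [Llog, Real.exp_log (hupos _), husum, Real.log_one, add_zero]
      rw [hL]
      rcases h k with h0 | hpos
      · simp [h0]
      · have hlog : Real.log c + Real.log (t k) ≤ Real.log (u k) := by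
          rw [← Real.log_mul hc0.ne' hpos.ne']
          refine Real.log_le_log (mul_pos hc0 hpos) ?_
          simp only [hu]
          linarith
        nlinarith [mul_le_mul_of_nonneg_left hlog (hp.1 k)]
    have hsum := Finset.sum_le_sum hbound
    rwa [Finset.sum_sub_distrib, ← Finset.sum_mul, hp.2, one_mul] at hsum

end Calib

theorem prop_logisticSimplex {K : ℕ} (hK : 2 ≤ K) :
    ∀ p ∈ stdSimplex ℝ (Fin K), ∀ j : Fin K,
      Calib.einf (Calib.Mset (Set.univ : Set (Fin K → ℝ)) j)
          (fun s => Calib.risk Calib.Llog s p) =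
        Calib.einfE (Calib.Mset (stdSimplex ℝ (Fin K)) j)
          (fun s => Calib.riskLR s p) := by
  intro p hp j
  apply le_antisymm
  · refine le_sInf ?_
    rintro _ ⟨t, ht, rfl⟩
    by_cases h : ∀ k, p k = 0 ∨ 0 < t k
    · change _ ≤ Calib.riskLR t p
      rw [Calib.riskLR_eq_coe h]
      refine EReal.le_of_forall_lt_iff_le.mp fun z hz => ?_
      have hz' := EReal.coe_lt_coe_iff.mp hz
      -- With `r` the risk of `t`, the choice `c = e^{r - z}` makes `r - ln c` equal to `z`.
      obtain ⟨s, hs, hle⟩ := Calib.exists_risk_le hp ht h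
        (c := Real.exp (∑ k, p k * -Real.log (t k) - z)) (Real.exp_pos _)
        (by rw [← Real.exp_zero]; exact Real.exp_lt_exp.mpr (by linarith))
      rw [Real.log_exp, sub_sub_cancel] at hle
      exact (sInf_le (Set.mem_image_of_mem _ hs)).trans (EReal.coe_le_coe_iff.mpr hle)
    · push Not at h
      obtain ⟨k, hpk, htk⟩ := h
      change _ ≤ Calib.riskLR t p
      rw [Calib.riskLR_eq_top hp ht.1 hpk htk]
      exact le_top
  · refine le_sInf ?_
    rintro _ ⟨s, hs, rfl⟩
    exact sInf_le ⟨Calib.softmax s, Calib.softmax_mem hs, Calib.riskLR_softmax s p⟩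
end
end

section
/- Let L₂ be the binary decoupled logistic-regression loss on Δ₂, with zero adjustment, so R'₂(u,q) = −q₁ ln u₁ − q₂ ln u₂ for q ∈ ℝ² with nonnegative entries. Then Condition ZhangInf holds with ψ(t) = −ln t: for all p₁,p₂ ≥ 0, sup_{v ∈ Δ₂} inf_{u ∈ Δ₂} [R'₂(u,(p̄,p̄)) − R'₂(v,(p₁,p₂))] = sup_{v ∈ Δ₂} inf over {u ∈ Δ₂ : u₁ = u₂ and −ln u₁ − ln u₂ ≤ −ln v₁ − ln v₂} of [R'₂(u,(p̄,p̄)) − R'₂(v,(p₁,p₂))], where p̄ = (p₁+p₂)/2. -/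
/-!
On the simplex `Δ₂` the only point with `u₀ = u₁` is `(1/2, 1/2)`. By AM-GM, `u₀ u₁ ≤ 1/4`, so this
point minimizes `-ln u₀ - ln u₁` (`negLog_half_le`). Hence it always satisfies the constraint
of the right-hand infimum, whose feasible set is thus the singleton `{(1/2, 1/2)}`, and, since
`p̄ ≥ 0`, it also attains the unconstrained infimum of `R'₂(u, (p̄, p̄))`. The two infima
therefore agree for every `v`, before the supremum is taken.
-/

open scoped BigOperators

noncomputable section

namespace Calib

lemma negLog_half_le {v : Fin 2 → ℝ} (hv : v ∈ stdSimplex ℝ (Fin 2)) :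
    negLog (1 / 2) + negLog (1 / 2) ≤ negLog (v 0) + negLog (v 1) := by
  obtain ⟨_, hsum⟩ := hv
  rw [Fin.sum_univ_two] at hsum
  unfold negLog
  by_cases h0 : v 0 ≤ 0
  · rw [if_pos h0]
    split_ifs <;> simp
  by_cases h1 : v 1 ≤ 0
  · rw [if_pos h1, if_neg h0, EReal.coe_add_top]
    exact le_top
  push Not at h0 h1
  rw [if_neg h0.not_ge, if_neg h1.not_ge, if_neg (by norm_num)]
  norm_cast
  have h : Real.log (v 0 * v 1) ≤ Real.log (1 / 2 * (1 / 2)) := by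
    apply Real.log_le_log (mul_pos h0 h1)
    nlinarith [sq_nonneg (v 0 - v 1)]
  rw [Real.log_mul h0.ne' h1.ne', Real.log_mul (by norm_num) (by norm_num)] at h
  linarith

lemma riskLR_pair_self (u : Fin 2 → ℝ) {q : ℝ} (hq : 0 ≤ q) :
    riskLR u (pair q q) = (q : EReal) * (negLog (u 0) + negLog (u 1)) := by
  rw [EReal.left_distrib_of_nonneg_of_ne_top (by exact_mod_cast hq) (EReal.coe_ne_top q)]
  simp [riskLR, pair, Fin.sum_univ_two]

end Calib

theorem lemma_logisticCondInfWithP :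
    ∀ p1 p2 : ℝ, 0 ≤ p1 → 0 ≤ p2 →
      Calib.esupE (stdSimplex ℝ (Fin 2)) (fun v =>
          Calib.einfE (stdSimplex ℝ (Fin 2)) (fun u =>
            Calib.riskLR u
                (Calib.pair ((p1 + p2) / 2) ((p1 + p2) / 2)) -
              Calib.riskLR v (Calib.pair p1 p2))) =
        Calib.esupE (stdSimplex ℝ (Fin 2)) (fun v =>
          Calib.einfE
            {u ∈ stdSimplex ℝ (Fin 2) | u 0 = u 1 ∧
              Calib.negLog (u 0) + Calib.negLog (u 1) ≤
                Calib.negLog (v 0) + Calib.negLog (v 1)}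
            (fun u =>
              Calib.riskLR u
                  (Calib.pair ((p1 + p2) / 2) ((p1 + p2) / 2)) -
                Calib.riskLR v (Calib.pair p1 p2))) := by
  intro p1 p2 hp1 hp2
  have hq : 0 ≤ (p1 + p2) / 2 := by positivity
  have half_mem : (fun _ => 1 / 2 : Fin 2 → ℝ) ∈ stdSimplex ℝ (Fin 2) :=
    ⟨fun _ => by norm_num, by norm_num⟩
  unfold Calib.esupE
  congr 1
  apply Set.image_congr
  intro v hv
  have feasible_eq : {u ∈ stdSimplex ℝ (Fin 2) | u 0 = u 1 ∧
      Calib.negLog (u 0) + Calib.negLog (u 1) ≤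
        Calib.negLog (v 0) + Calib.negLog (v 1)} = {fun _ => 1 / 2} := by
    ext u
    constructor
    · rintro ⟨⟨_, hsum⟩, heq, _⟩
      rw [Fin.sum_univ_two] at hsum
      ext k
      fin_cases k
      · change u 0 = 1 / 2
        linarith
      · change u 1 = 1 / 2
        linarith
    · rintro rfl
      exact ⟨half_mem, rfl, Calib.negLog_half_le hv⟩
  rw [feasible_eq]
  simp only [Calib.einfE, Set.image_singleton, sInf_singleton]
  apply le_antisymm
  · exact sInf_le ⟨_, half_mem, rfl⟩
  · apply le_sInf
    rintro _ ⟨u, hu, rfl⟩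
    refine EReal.sub_le_sub ?_ le_rfl
    rw [Calib.riskLR_pair_self _ hq, Calib.riskLR_pair_self _ hq]
    exact mul_le_mul_of_nonneg_left (Calib.negLog_half_le hu) (by exact_mod_cast hq)
end
end
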